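/- For every m ≥ 1 odd and every n ≥ 3 odd, the n-th bidirectional topological complexity of the m-sphere equals n: TC^β_n(S^m) = n, where S^m is the unit sphere in ℝ^{m+1}. -/

import Mathlib

open unitInterval

noncomputable section

/-- The point `j/(n-1)` of the unit interval, for `j : Fin n`.
These are the `n` evaluation points `0, 1/(n-1), …, (n-2)/(n-1), 1`. -/
def evalPt (n : ℕ) (j : Fin n) : unitInterval :=
  ⟨(j : ℝ) / ((n : ℝ) - 1), by
    have hn : 1 ≤ n := j.pos
    rcases eq_or_lt_of_le hn with h | h
    · have hn1 : n = 1 := h.symm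
      subst hn1
      simp [Fin.fin_one_eq_zero j]
    · have h1 : (0 : ℝ) < (n : ℝ) - 1 := by
        have : (1 : ℝ) < (n : ℝ) := by exact_mod_cast h
        linarith
      constructor
      · exact div_nonneg (Nat.cast_nonneg _) h1.le
      · rw [div_le_one h1]
        have hj : (j : ℕ) + 1 ≤ n := j.is_lt
        have : ((j : ℕ) : ℝ) + 1 ≤ (n : ℝ) := by exact_mod_cast hj
        linarith⟩

/-- Coordinate reversal (the involution `β`) on `n`-tuples:
`β·(x_1,…,x_n) = (x_n,…,x_1)`. -/
def rtuple {X : Type*} {n : ℕ} (x : Fin n → X) : Fin n → X := fun j => x j.rev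

/-- Path reversal (the involution `β`) on the free path space `C(I,X)`:
`(β·γ)(t) = γ(1-t)`. -/
def rpath {X : Type*} [TopologicalSpace X] (γ : C(unitInterval, X)) : C(unitInterval, X) :=
  γ.comp ⟨unitInterval.symm, unitInterval.continuous_symm⟩

/-- `X^n` can be covered by `k` open sets, on each of which there is a continuous
section of the evaluation map `e_n : C(I,X) → X^n`,
`γ ↦ (γ(0), γ(1/(n-1)), …, γ(1))`. -/
def HasPlanners (X : Type*) [TopologicalSpace X] (n k : ℕ) : Prop :=
  ∃ U : Fin k → Set (Fin n → X),
    (∀ i, IsOpen (U i)) ∧ (⋃ i, U i) = Set.univ ∧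
    (∀ i, ∃ s : C(U i, C(unitInterval, X)),
      ∀ x : U i, ∀ j : Fin n, s x (evalPt n j) = (x : Fin n → X) j)

/-- The `n`-th (ordinary, higher) topological complexity `TC_n(X)`, as a value in `ℕ∞`. -/
def TCn (X : Type*) [TopologicalSpace X] (n : ℕ) : ℕ∞ :=
  sInf {k : ℕ∞ | ∃ m : ℕ, (m : ℕ∞) = k ∧ HasPlanners X n m}

/-- `X^n` can be covered by `k` β-invariant open sets, on each of which there is a
continuous β-equivariant section of the evaluation map `e_n : C(I,X) → X^n`
(a bidirectional motion planner). -/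
def HasBidirPlanners (X : Type*) [TopologicalSpace X] (n k : ℕ) : Prop :=
  ∃ U : Fin k → Set (Fin n → X),
    (∀ i, IsOpen (U i)) ∧ (⋃ i, U i) = Set.univ ∧
    (∀ i, ∀ x ∈ U i, rtuple x ∈ U i) ∧
    (∀ i, ∃ s : C(U i, C(unitInterval, X)),
      (∀ x : U i, ∀ j : Fin n, s x (evalPt n j) = (x : Fin n → X) j) ∧
      (∀ x : U i, ∀ hx : rtuple (x : Fin n → X) ∈ U i,
        s ⟨rtuple (x : Fin n → X), hx⟩ = rpath (s x)))

/-- The `n`-th bidirectional topological complexity `TC^β_n(X)`, as a value in `ℕ∞`. -/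
def TCbeta (X : Type*) [TopologicalSpace X] (n : ℕ) : ℕ∞ :=
  sInf {k : ℕ∞ | ∃ m : ℕ, (m : ℕ∞) = k ∧ HasBidirPlanners X n m}

/-- The action of a permutation `sg ∈ Σ_n` on `n`-tuples (by permuting coordinates). -/
def permTuple {X : Type*} {n : ℕ} (sg : Equiv.Perm (Fin n)) (x : Fin n → X) : Fin n → X :=
  fun j => x (sg j)

/-- `X^n` can be covered by `k` `Σ_n`-invariant open sets, on each of which there is a
continuous `Σ_n`-equivariant section of `E_n : X^{J_n} → X^n`,
`(α_1,…,α_n) ↦ (α_1(1),…,α_n(1))`, where `X^{J_n}` is the space of `n`-tuples of paths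
with a common initial point. -/
def HasSymPlanners (X : Type*) [TopologicalSpace X] (n k : ℕ) : Prop :=
  ∃ U : Fin k → Set (Fin n → X),
    (∀ i, IsOpen (U i)) ∧ (⋃ i, U i) = Set.univ ∧
    (∀ i, ∀ sg : Equiv.Perm (Fin n), ∀ x ∈ U i, permTuple sg x ∈ U i) ∧
    (∀ i, ∃ s : C(U i, Fin n → C(unitInterval, X)),
      (∀ x : U i, ∀ j j' : Fin n, s x j 0 = s x j' 0) ∧
      (∀ x : U i, ∀ j : Fin n, s x j 1 = (x : Fin n → X) j) ∧
      (∀ x : U i, ∀ sg : Equiv.Perm (Fin n),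
        ∀ hx : permTuple sg (x : Fin n → X) ∈ U i,
        s ⟨permTuple sg (x : Fin n → X), hx⟩ = permTuple sg (s x)))

/-- The `n`-th symmetrized topological complexity `TC^Σ_n(X)`, as a value in `ℕ∞`. -/
def TCsym (X : Type*) [TopologicalSpace X] (n : ℕ) : ℕ∞ :=
  sInf {k : ℕ∞ | ∃ m : ℕ, (m : ℕ∞) = k ∧ HasSymPlanners X n m}

/-- The unit sphere `S^m ⊂ ℝ^{m+1}`. -/
abbrev Sph (m : ℕ) : Type :=
  Metric.sphere (0 : EuclideanSpace ℝ (Fin (m + 1))) 1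

end

/-!
Lower bound: suppose that `k < n` open sets with planners cover `X^n`. Consider the tuples whose
first entry is a base point and whose next `k` entries are the coordinates of `x : X^k`. Following
the path of the `i`-th planner up to the entry `x i`, with time cut off outside the `i`-th open
set, gives a nullhomotopic self-map of `X^k` which for every `x` preserves some coordinate of `x`.
For `X` the unit sphere of `E`, its composition with the antipodal map has no fixed point, but
being nullhomotopic it extends to `E^k`, against Brouwer's theorem.

Brouwer's theorem (after Milnor and Rogers): if `φ` is `C¹` and supported in a ball, the integral
over that ball of a polynomial in `‖x‖ ^ 2`, transported by the change of variables `x + t • φ x`,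
is a polynomial in `t` that is constant near `0`, hence constant up to `t = 1`. If `x + φ x` never
vanished, the powers of `c - ‖x‖ ^ 2` would have integrals growing at two different rates.

Upper bound: join consecutive points of a tuple by normalized affine paths, after bending the
nearly antipodal edges in the direction of a unit tangent field at the end nearer to the middle of
the tuple; this is compatible with reversal because the number of edges is even. The open sets on
which a given set of edges is more antipodal than the remaining ones are disjoint for different
sets of the same cardinality, so the `n` possible cardinalities give `n` planners.
-/

section ChangeOfVariables

open MeasureTheory Set
open scoped Topology NNReal

variable {E : Type*} [NormedAddCommGroup E] [NormedSpace ℝ E]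

theorem image_eq_self_of_bijective_of_eqOn_compl {α : Type*} {f : α → α} {s : Set α}
    (hf : Function.Bijective f) (hs : EqOn f id sᶜ) : f '' s = s := by
  rw [← compl_inj_iff, ← image_compl_eq hf, hs.image_eq, image_id]

theorem eventually_bijective_id_add_smul [CompleteSpace E] {φ : E → E} {C : ℝ≥0}
    (hφ : LipschitzWith C φ) :
    ∀ᶠ t in 𝓝 (0 : ℝ), Function.Bijective fun x => x + t • φ x := by
  have small : ∀ᶠ t in 𝓝 (0 : ℝ), ‖t‖₊ * C < 1 :=
    ((continuous_nnnorm.mul continuous_const).tendsto' 0 0 (by simp)).eventually_lt_const one_pos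
  filter_upwards [small] with t ht
  have approx : ApproximatesLinearOn (fun x => x + t • φ x)
      (ContinuousLinearEquiv.refl ℝ E : E →L[ℝ] E) univ (‖t‖₊ * C) := by
    rw [ApproximatesLinearOn.approximatesLinearOn_iff_lipschitzOnWith, lipschitzOnWith_univ]
    refine LipschitzWith.of_dist_le_mul fun x y => ?_
    simpa [dist_smul₀, mul_assoc] using
      mul_le_mul_of_nonneg_left (hφ.dist_le_mul x y) (norm_nonneg t)
  have hc : Subsingleton E ∨
      ‖t‖₊ * C < ‖((ContinuousLinearEquiv.refl ℝ E).symm : E →L[ℝ] E)‖₊⁻¹ :=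
    (subsingleton_or_nontrivial E).imp_right fun (_ : Nontrivial E) => by simpa using ht
  exact ⟨injOn_univ.1 (injOn_iff_injective.2 (approx.injective hc)), approx.surjective hc⟩

theorem eventually_forall_det_id_add_smul_pos [FiniteDimensional ℝ E] {X : Type*}
    [TopologicalSpace X] {K : Set X} (hK : IsCompact K) {D : X → E →L[ℝ] E} (hD : Continuous D) :
    ∀ᶠ t in 𝓝 (0 : ℝ), ∀ x ∈ K, 0 < (ContinuousLinearMap.id ℝ E + t • D x).det := by
  refine hK.eventually_forall_of_forall_eventually fun x _ => ?_
  have hdet : Continuous fun z : ℝ × X => (ContinuousLinearMap.id ℝ E + z.1 • D z.2).det :=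
    ContinuousLinearMap.continuous_det.comp (by fun_prop)
  exact hdet.continuousAt.eventually (lt_mem_nhds (by simp [ContinuousLinearMap.det]))

theorem eventually_setIntegral_comp_id_add_smul [FiniteDimensional ℝ E] [MeasurableSpace E]
    [BorelSpace E] (μ : Measure E) [μ.IsAddHaarMeasure] {φ : E → E} (hφ : ContDiff ℝ 1 φ)
    {K : Set E} (hK : IsCompact K) (hφK : EqOn φ 0 Kᶜ) :
    ∀ᶠ t in 𝓝 (0 : ℝ), ∀ g : E → ℝ,
      ∫ x in K, g (x + t • φ x) * (ContinuousLinearMap.id ℝ E + t • fderiv ℝ φ x).det ∂μ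
        = ∫ x in K, g x ∂μ := by
  obtain ⟨C, hC⟩ := hφ.lipschitzWith_of_hasCompactSupport
    (HasCompactSupport.intro hK fun x hx => hφK hx) one_ne_zero
  filter_upwards [eventually_bijective_id_add_smul hC,
    eventually_forall_det_id_add_smul_pos hK (hφ.continuous_fderiv one_ne_zero)] with t hbij hpos g
  have hderiv : ∀ x ∈ K, HasFDerivWithinAt (fun x => x + t • φ x)
      (ContinuousLinearMap.id ℝ E + t • fderiv ℝ φ x) K x := fun x _ =>
    ((hasFDerivAt_id x).add
      ((hφ.differentiable one_ne_zero x).hasFDerivAt.const_smul t)).hasFDerivWithinAt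
  have himage : (fun x => x + t • φ x) '' K = K :=
    image_eq_self_of_bijective_of_eqOn_compl hbij fun x hx => by simp [hφK hx]
  calc ∫ x in K, g (x + t • φ x) * (ContinuousLinearMap.id ℝ E + t • fderiv ℝ φ x).det ∂μ
      = ∫ x in K, |(ContinuousLinearMap.id ℝ E + t • fderiv ℝ φ x).det| • g (x + t • φ x) ∂μ :=
        setIntegral_congr_fun hK.measurableSet fun x hx => by
          simp only [abs_of_pos (hpos x hx), smul_eq_mul, mul_comm]
    _ = ∫ x in K, g x ∂μ := by
        rw [← integral_image_eq_integral_abs_det_fderiv_smul μ hK.measurableSet hderiv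
          hbij.injective.injOn, himage]

end ChangeOfVariables

section PolynomialIntegrals

open MeasureTheory Polynomial Set

section EvalAt

variable {X : Type*} [TopologicalSpace X]

/-- The value at time `t` and at the point `x` of a polynomial in one indeterminate (the time)
whose coefficients are continuous functions on `X`. -/
noncomputable def evalAt (t : ℝ) (x : X) : C(X, ℝ)[X] →ₐ[ℝ] ℝ :=
  eval₂AlgHom (ContinuousMap.evalAlgHom ℝ ℝ x) t fun _ => Commute.all _ _

@[simp]
theorem evalAt_X (t : ℝ) (x : X) : evalAt t x Polynomial.X = t := by
  simp [evalAt]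

@[simp]
theorem evalAt_C (t : ℝ) (x : X) (a : C(X, ℝ)) : evalAt t x (C a) = a x := by
  simp [evalAt]

theorem evalAt_eq_sum (t : ℝ) (x : X) (Q : C(X, ℝ)[X]) :
    evalAt t x Q = ∑ k ∈ Q.support, Q.coeff k x * t ^ k := by
  simp [evalAt, eval₂_eq_sum, Polynomial.sum]

theorem exists_polynomial_eval_eq_setIntegral_evalAt [T2Space X] [MeasurableSpace X]
    [OpensMeasurableSpace X] (μ : Measure X) [IsFiniteMeasureOnCompacts μ] {K : Set X}
    (hK : IsCompact K) (Q : C(X, ℝ)[X]) :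
    ∃ P : ℝ[X], ∀ t, P.eval t = ∫ x in K, evalAt t x Q ∂μ := by
  refine ⟨∑ k ∈ Q.support, C (∫ x in K, Q.coeff k x ∂μ) * Polynomial.X ^ k, fun t => ?_⟩
  have integrable : ∀ k ∈ Q.support, Integrable (fun x => Q.coeff k x * t ^ k) (μ.restrict K) :=
    fun k _ => ((Q.coeff k).continuous.mul continuous_const).continuousOn.integrableOn_compact hK
  simp only [evalAt_eq_sum, integral_finsetSum _ integrable, integral_mul_const, eval_finsetSum,
    eval_mul, eval_C, eval_pow, eval_X]

variable {E : Type*} [NormedAddCommGroup E] [InnerProductSpace ℝ E]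

theorem exists_evalAt_eq_norm_sq_add_smul {f g : X → E} (hf : Continuous f) (hg : Continuous g) :
    ∃ Q : C(X, ℝ)[X], ∀ t x, evalAt t x Q = ‖f x + t • g x‖ ^ 2 := by
  let a₀ : C(X, ℝ) := ⟨fun x => ‖f x‖ ^ 2, by fun_prop⟩
  let a₁ : C(X, ℝ) := ⟨fun x => 2 * inner ℝ (f x) (g x), by fun_prop⟩
  let a₂ : C(X, ℝ) := ⟨fun x => ‖g x‖ ^ 2, by fun_prop⟩
  refine ⟨C a₀ + C a₁ * Polynomial.X + C a₂ * Polynomial.X ^ 2, fun t x => ?_⟩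
  simp only [map_add, map_mul, map_pow, evalAt_C, evalAt_X, ContinuousMap.coe_mk,
    norm_add_sq_real, inner_smul_right, norm_smul, Real.norm_eq_abs, mul_pow, sq_abs, a₀, a₁, a₂]
  ring

theorem exists_evalAt_eq_det_id_add_smul [FiniteDimensional ℝ E] {D : X → E →L[ℝ] E}
    (hD : Continuous D) :
    ∃ Q : C(X, ℝ)[X], ∀ t x, evalAt t x Q = (ContinuousLinearMap.id ℝ E + t • D x).det := by
  let b := stdOrthonormalBasis ℝ E
  let M : Matrix (Fin _) (Fin _) C(X, ℝ) :=
    .of fun i j => ⟨fun x => inner ℝ (b i) (D x (b j)), by fun_prop⟩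
  refine ⟨(1 + (Polynomial.X : C(X, ℝ)[X]) • M.map C).det, fun t x => ?_⟩
  rw [AlgHom.map_det, ContinuousLinearMap.det, ← LinearMap.det_toMatrix b.toBasis]
  congr 1
  ext i j
  simp [M, LinearMap.toMatrix_apply, Matrix.one_apply, apply_ite, b.repr_apply_apply, mul_comm t]

end EvalAt

variable {E : Type*} [NormedAddCommGroup E] [InnerProductSpace ℝ E] [FiniteDimensional ℝ E]
  [MeasurableSpace E] [BorelSpace E] (μ : Measure E) [μ.IsAddHaarMeasure]

theorem setIntegral_eval_norm_sq_mul_det {φ : E → E} (hφ : ContDiff ℝ 1 φ) {K : Set E}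
    (hK : IsCompact K) (hφK : EqOn φ 0 Kᶜ) (p : ℝ[X]) :
    ∫ x in K, p.eval (‖x + φ x‖ ^ 2) * (ContinuousLinearMap.id ℝ E + fderiv ℝ φ x).det ∂μ
      = ∫ x in K, p.eval (‖x‖ ^ 2) ∂μ := by
  obtain ⟨Q₁, hQ₁⟩ := exists_evalAt_eq_norm_sq_add_smul continuous_id hφ.continuous
  obtain ⟨Q₂, hQ₂⟩ := exists_evalAt_eq_det_id_add_smul (hφ.continuous_fderiv one_ne_zero)
  obtain ⟨P, hP⟩ := exists_polynomial_eval_eq_setIntegral_evalAt μ hK (aeval Q₁ p * Q₂)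
  have evalAt_eq : ∀ t x, evalAt t x (aeval Q₁ p * Q₂) = p.eval (‖x + t • φ x‖ ^ 2) *
      (ContinuousLinearMap.id ℝ E + t • fderiv ℝ φ x).det := fun t x => by
    rw [map_mul, ← aeval_algHom_apply, hQ₁, hQ₂, coe_aeval_eq_eval, id]
  have eval_P : ∀ t, P.eval t = ∫ x in K, p.eval (‖x + t • φ x‖ ^ 2) *
      (ContinuousLinearMap.id ℝ E + t • fderiv ℝ φ x).det ∂μ := fun t => by
    simp only [hP, evalAt_eq]
  have P_const : P = C (∫ x in K, p.eval (‖x‖ ^ 2) ∂μ) := by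
    refine eq_of_infinite_eval_eq _ _ (infinite_of_mem_nhds 0 ?_)
    filter_upwards [eventually_setIntegral_comp_id_add_smul μ hφ hK hφK] with t ht
    rw [eval_P, eval_C]
    exact ht fun y => p.eval (‖y‖ ^ 2)
  simpa only [P_const, eval_C, one_smul] using (eval_P 1).symm

end PolynomialIntegrals

section Brouwer

open MeasureTheory Set Filter Polynomial
open scoped Topology

theorem le_of_forall_mul_pow_le_mul_pow {a b v C : ℝ} (hv : 0 < v) (ha : 0 ≤ a)
    (h : ∀ k : ℕ, v * b ^ k ≤ C * a ^ k) : b ≤ a := by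
  by_contra! hab
  have hb : 0 < b := ha.trans_lt hab
  have bound : ∀ k : ℕ, v ≤ C * (a / b) ^ k := fun k => by
    rw [div_pow, mul_div_assoc', le_div_iff₀ (pow_pos hb k)]
    exact h k
  have lim : Tendsto (fun k : ℕ => C * (a / b) ^ k) atTop (𝓝 (C * 0)) :=
    (tendsto_pow_atTop_nhds_zero_of_lt_one (by positivity) ((div_lt_one hb).2 hab)).const_mul C
  exact hv.not_ge (by simpa using ge_of_tendsto' lim bound)

/-- Laplace's principle: the growth rate of `∫ u ^ k` is the maximum of `u`. -/
theorem le_of_forall_setIntegral_pow_le {X : Type*} [TopologicalSpace X] [T2Space X]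
    [MeasurableSpace X] [OpensMeasurableSpace X] {μ : Measure X} [IsFiniteMeasureOnCompacts μ]
    {K s : Set X} (hK : IsCompact K) (hs : MeasurableSet s) (hsK : s ⊆ K) (hμs : μ s ≠ 0)
    {u v w : X → ℝ} {a b : ℝ} (hv : Continuous v) (hw : Continuous w)
    (hu₀ : ∀ x ∈ K, 0 ≤ u x) (hua : ∀ x ∈ K, u x ≤ a) (hv₀ : ∀ x ∈ K, 0 ≤ v x)
    (hvb : ∀ x ∈ s, b ≤ v x)
    (h : ∀ k : ℕ, ∫ x in K, v x ^ k ∂μ = ∫ x in K, u x ^ k * w x ∂μ) : b ≤ a := by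
  have hμsK : μ s ≠ ⊤ := ((measure_mono hsK).trans_lt hK.measure_lt_top).ne
  obtain ⟨x, hx⟩ := nonempty_of_measure_ne_zero hμs
  have ha : 0 ≤ a := (hu₀ x (hsK hx)).trans (hua x (hsK hx))
  obtain ⟨W, hW⟩ := hK.exists_bound_of_continuousOn hw.continuousOn
  rcases lt_or_ge b 0 with hb | hb
  · exact hb.le.trans ha
  refine le_of_forall_mul_pow_le_mul_pow (C := W * μ.real K)
    (ENNReal.toReal_pos hμs hμsK) ha fun k => ?_
  have integrable : IntegrableOn (fun x => v x ^ k) K μ :=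
    (hv.pow k).continuousOn.integrableOn_compact hK
  calc μ.real s * b ^ k
      ≤ ∫ x in s, v x ^ k ∂μ :=
        setIntegral_ge_of_const_le hs hμsK (fun x hx => pow_le_pow_left₀ hb (hvb x hx) k)
          (integrable.mono_set hsK)
    _ ≤ ∫ x in K, v x ^ k ∂μ :=
        setIntegral_mono_set integrable
          (ae_restrict_of_forall_mem hK.measurableSet fun x hx => pow_nonneg (hv₀ x hx) k)
          hsK.eventuallyLE
    _ ≤ ‖∫ x in K, u x ^ k * w x ∂μ‖ := (h k).trans_le (Real.le_norm_self _)
    _ ≤ a ^ k * W * μ.real K :=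
        norm_setIntegral_le_of_norm_le_const hK.measure_lt_top fun x hx => by
          rw [norm_mul, norm_pow, Real.norm_of_nonneg (hu₀ x hx)]
          gcongr
          exacts [hu₀ x hx, hua x hx, hW x hx]
    _ = W * μ.real K * a ^ k := by ring

theorem exists_add_eq_zero_of_contDiff {E : Type*} [NormedAddCommGroup E] [InnerProductSpace ℝ E]
    [FiniteDimensional ℝ E] {φ : E → E} (hφ : ContDiff ℝ 1 φ) {R : ℝ} (hR : 0 < R)
    (hφR : EqOn φ 0 (Metric.closedBall 0 R)ᶜ) : ∃ x, x + φ x = 0 := by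
  borelize E
  by_contra! hne
  set K := Metric.closedBall (0 : E) R
  have hK : IsCompact K := isCompact_closedBall 0 R
  have hφc := hφ.continuous
  have hdet : Continuous fun x => (ContinuousLinearMap.id ℝ E + fderiv ℝ φ x).det :=
    ContinuousLinearMap.continuous_det.comp
      (continuous_const.add (hφ.continuous_fderiv one_ne_zero))
  obtain ⟨x₀, -, hx₀⟩ := hK.exists_isMinOn ⟨0, Metric.mem_closedBall_self hR.le⟩
    (f := fun x => ‖x + φ x‖) (by fun_prop)
  obtain ⟨c, hc⟩ := hK.exists_bound_of_continuousOn
    (f := fun x => ‖x‖ ^ 2 + ‖x + φ x‖ ^ 2) (by fun_prop)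
  have hc' : ∀ x ∈ K, ‖x‖ ^ 2 + ‖x + φ x‖ ^ 2 ≤ c := fun x hx => (le_abs_self _).trans (hc x hx)
  have hδ : 0 < ‖x₀ + φ x₀‖ := norm_pos_iff.2 (hne x₀)
  set δ := ‖x₀ + φ x₀‖
  set r := min (δ / 2) R
  have hr : 0 < r := lt_min (half_pos hδ) hR
  have hrδ : r < δ := (min_le_left _ _).trans_lt (half_lt_self hδ)
  have integral_pow : ∀ k : ℕ, ∫ x in K, (c - ‖x‖ ^ 2) ^ k ∂Measure.addHaar =
      ∫ x in K, (c - ‖x + φ x‖ ^ 2) ^ k *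
        (ContinuousLinearMap.id ℝ E + fderiv ℝ φ x).det ∂Measure.addHaar := fun k => by
    have h := setIntegral_eval_norm_sq_mul_det Measure.addHaar hφ hK hφR ((C c - X) ^ k)
    simpa only [eval_pow, eval_sub, eval_C, eval_X] using h.symm
  have key : c - r ^ 2 ≤ c - δ ^ 2 :=
    le_of_forall_setIntegral_pow_le (μ := Measure.addHaar) hK
      Metric.isClosed_closedBall.measurableSet
      (Metric.closedBall_subset_closedBall (min_le_right _ _))
      (Metric.measure_closedBall_pos _ (0 : E) hr).ne'
      (u := fun x => c - ‖x + φ x‖ ^ 2) (v := fun x => c - ‖x‖ ^ 2) (by fun_prop) hdet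
      (fun x hx => by nlinarith [hc' x hx, sq_nonneg ‖x‖])
      (fun x hx => sub_le_sub_left (pow_le_pow_left₀ hδ.le (hx₀ hx) 2) c)
      (fun x hx => by nlinarith [hc' x hx, sq_nonneg ‖x + φ x‖])
      (fun x hx => sub_le_sub_left
        (pow_le_pow_left₀ (norm_nonneg x) (mem_closedBall_zero_iff.1 hx) 2) c)
      integral_pow
  nlinarith

theorem exists_add_eq_zero_of_continuous {E : Type*} [NormedAddCommGroup E]
    [InnerProductSpace ℝ E] [FiniteDimensional ℝ E] {φ : E → E} (hφ : Continuous φ) {R : ℝ}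
    (hR : 0 < R) (hφR : EqOn φ 0 (Metric.closedBall 0 R)ᶜ) : ∃ x, x + φ x = 0 := by
  by_contra! hne
  obtain ⟨g, hg, hgφ, hsupp⟩ := hφ.exists_contDiff_approx 1 (ε := fun x => ‖x + φ x‖)
    (by fun_prop) fun x => norm_pos_iff.2 (hne x)
  obtain ⟨x, hx⟩ := exists_add_eq_zero_of_contDiff hg hR fun x hx =>
    Function.notMem_support.1 fun hxg => hsupp hxg (hφR hx)
  have hlt := hgφ x
  rw [eq_neg_of_add_eq_zero_right hx, dist_eq_norm, ← neg_add', norm_neg] at hlt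
  exact hlt.false

theorem brouwer_fixed_point {V : Type*} [NormedAddCommGroup V] [NormedSpace ℝ V]
    [FiniteDimensional ℝ V] {G : V → V} (hG : Continuous G)
    (hGb : Bornology.IsBounded (range G)) : ∃ x, Function.IsFixedPt G x := by
  let e := toEuclidean (E := V)
  have bounded : Bornology.IsBounded (range fun y => e (G (e.symm y))) :=
    (e.lipschitz.isBounded_image hGb).subset
      (range_subset_iff.2 fun y => mem_image_of_mem e (mem_range_self _))
  obtain ⟨r, hr, hGr⟩ := bounded.exists_pos_norm_le
  replace hGr : ∀ y, ‖e (G (e.symm y))‖ ≤ r := fun y => hGr _ (mem_range_self y)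
  let χ : ContDiffBump (0 : EuclideanSpace ℝ (Fin (Module.finrank ℝ V))) :=
    ⟨r, r + 1, hr, lt_add_one r⟩
  obtain ⟨y, hy⟩ := exists_add_eq_zero_of_continuous
    (φ := fun y => -(χ y • e (G (e.symm y)))) (R := r + 1) (by have := χ.continuous; fun_prop)
    (by positivity) fun y hy => by
      have hy' : r + 1 ≤ dist y 0 := le_of_lt (by simpa using hy)
      simp [χ.zero_of_le_dist hy']
  rw [← sub_eq_add_neg, sub_eq_zero] at hy
  have hyr : ‖y‖ ≤ r := by
    rw [hy, norm_smul, Real.norm_of_nonneg χ.nonneg]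
    exact (mul_le_of_le_one_left (norm_nonneg _) χ.le_one).trans (hGr y)
  rw [χ.one_of_mem_closedBall (mem_closedBall_zero_iff.2 hyr), one_smul] at hy
  exact ⟨e.symm y, (e.symm_apply_eq.2 hy).symm⟩

end Brouwer

section LowerBound

open Set Metric

theorem continuous_of_continuousOn_isOpen_of_continuousOn_compl {X Y : Type*} [TopologicalSpace X]
    [TopologicalSpace Y] {f : X → Y} {U C : Set X} (hU : IsOpen U) (hC : IsClosed C)
    (hCU : C ⊆ U) (hfU : ContinuousOn f U) (hfC : ContinuousOn f Cᶜ) : Continuous f := by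
  have hcover : U ∪ Cᶜ = univ := by
    rw [← univ_subset_iff, ← union_compl_self C]
    exact union_subset_union_left _ hCU
  rw [← continuousOn_univ, ← hcover]
  exact hfU.union_of_isOpen hfC hU hC.isOpen_compl

/-- The planner `s` with its time parameter cut off by `b`: outside the support of `b` only its
value `p` at time `0` remains, so the cut-off planner extends to all of `Y`. -/
theorem exists_extension_of_planner_of_cutoff {X Y : Type*} [TopologicalSpace X]
    [TopologicalSpace Y] {U : Set Y} (hU : IsOpen U) {p : X} (s : C(U, C(I, X)))
    (hs : ∀ y, s y 0 = p) (b : C(Y, ℝ)) (hb : tsupport b ⊆ U) (θ : I) :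
    ∃ H : C(I × Y, X), (∀ y, H (0, y) = p) ∧
      ∀ y : U, b y = 1 → H (1, y) = s y θ := by
  classical
  let time : C(I × Y, I) := ⟨fun z => projIcc 0 1 zero_le_one (z.1 * b z.2 * θ), by fun_prop⟩
  have time_eq_zero : ∀ z : I × Y, z.1 * b z.2 * (θ : ℝ) = 0 → time z = 0 := fun z hz => by
    simp [time, hz]
  let f : I × Y → X := fun z => if hz : z.2 ∈ U then s ⟨z.2, hz⟩ (time z) else p
  have f_of_time_eq_zero : ∀ z, time z = 0 → f z = p := fun z hz => by
    simp only [f, hz, hs, dite_eq_ite, ite_self]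
  have hf : Continuous f := by
    refine continuous_of_continuousOn_isOpen_of_continuousOn_compl (hU.preimage continuous_snd)
      ((isClosed_tsupport b).preimage continuous_snd) (preimage_mono hb) ?_ ?_
    · rw [continuousOn_iff_continuous_domRestrict]
      have : Continuous fun z : (Prod.snd ⁻¹' U : Set (I × Y)) => s ⟨z.1.2, z.2⟩ (time z) := by
        fun_prop
      exact this.congr fun z => by simp only [domRestrict_apply, f, dif_pos (mem_preimage.1 z.2)]
    · refine continuousOn_const.congr fun z hz => f_of_time_eq_zero z (time_eq_zero z ?_)
      rw [image_eq_zero_of_notMem_tsupport hz, mul_zero, zero_mul]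
  refine ⟨⟨f, hf⟩, fun y => f_of_time_eq_zero _ (time_eq_zero _ (by simp)), fun y hy => ?_⟩
  have time_eq : time (1, y) = θ := by simp [time, hy]
  simp only [ContinuousMap.coe_mk, f, time_eq, dif_pos y.2]

theorem evalPt_zero (n : ℕ) : evalPt (n + 1) 0 = 0 := by
  simp [evalPt]

theorem HasPlanners.exists_nullhomotopic {X : Type*} [TopologicalSpace X] {n k : ℕ}
    [NormalSpace (Fin k → X)] (h : HasPlanners X n k) (hkn : k < n) (p : X) :
    ∃ G : C(Fin k → X, Fin k → X), G.Nullhomotopic ∧ ∀ x, ∃ i, G x i = x i := by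
  obtain ⟨m, rfl⟩ : ∃ m, n = m + 1 := ⟨n - 1, by omega⟩
  have hkm : k ≤ m := Nat.lt_succ_iff.1 hkn
  obtain ⟨U, hUo, hU, hs⟩ := h
  choose s hs using hs
  let ins : C(Fin k → X, Fin (m + 1) → X) :=
    ⟨fun x => Fin.cons p fun j : Fin m => if hj : j < k then x ⟨j, hj⟩ else p, by
      refine continuous_pi (Fin.cases continuous_const fun j => ?_)
      simp only [Fin.cons_succ]
      split_ifs <;> fun_prop⟩
  have ins_succ : ∀ x i, ins x (Fin.castLE hkm i).succ = x i := fun x i => by simp [ins]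
  obtain ⟨b, hb⟩ := BumpCovering.exists_isSubordinate_of_locallyFinite isClosed_univ
    (fun i => ins ⁻¹' U i) (fun i => (hUo i).preimage ins.continuous)
    (locallyFinite_of_finite _) (by rw [← preimage_iUnion, hU, preimage_univ])
  have extension : ∀ i, ∃ H : C(I × (Fin k → X), X), (∀ x, H (0, x) = p) ∧
      ∀ x, b i x = 1 → H (1, x) = x i := fun i => by
    obtain ⟨H, H_zero, H_one⟩ := exists_extension_of_planner_of_cutoff
      ((hUo i).preimage ins.continuous) ((s i).comp (ins.restrictPreimage (U i)))
      (fun x => by rw [← evalPt_zero m]; exact hs i _ 0) (b i) (hb i)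
      (evalPt (m + 1) (Fin.castLE hkm i).succ)
    refine ⟨H, H_zero, fun x hx => ?_⟩
    have hxU : x ∈ ins ⁻¹' U i := hb i (subset_tsupport _ (by simp [hx]))
    exact (H_one ⟨x, hxU⟩ hx).trans ((hs i _ _).trans (ins_succ x i))
  choose H H_zero H_one using extension
  refine ⟨⟨fun x i => H i (1, x), by fun_prop⟩, ⟨fun _ => p, ⟨?_⟩⟩, fun x => ?_⟩
  · exact ContinuousMap.Homotopy.symm
      { toFun := fun z i => H i z
        map_zero_left := fun x => funext fun i => H_zero i x
        map_one_left := fun x => rfl }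
  · obtain ⟨i, hi⟩ := b.eventuallyEq_one' x (mem_univ x)
    exact ⟨i, H_one i x hi.eq_of_nhds⟩

variable {E : Type*} [NormedAddCommGroup E] [NormedSpace ℝ E]

/-- The radial projection `x ↦ x / ‖x‖` from the nonzero vectors onto the unit sphere. -/
noncomputable def radialProj (x : ({0}ᶜ : Set E)) : sphere (0 : E) 1 :=
  (homeomorphUnitSphereProd E x).1

@[fun_prop]
theorem continuous_radialProj : Continuous (radialProj (E := E)) := by
  unfold radialProj
  fun_prop

theorem radialProj_coe (x : sphere (0 : E) 1) (hx : (x : E) ∈ ({0}ᶜ : Set E)) :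
    radialProj ⟨(x : E), hx⟩ = x :=
  Subtype.ext <| by
    rw [radialProj, homeomorphUnitSphereProd_apply_fst_coe, norm_eq_of_mem_sphere, inv_one,
      one_smul]

theorem exists_extension_of_nullhomotopic {X ι : Type*} [TopologicalSpace X] [Finite ι]
    {g : C(ι → sphere (0 : E) 1, X)} (hg : g.Nullhomotopic) :
    ∃ f : C(ι → E, X), ∀ x : ι → sphere (0 : E) 1, f (fun i => x i) = g x := by
  classical
  cases nonempty_fintype ι
  obtain ⟨p, ⟨H⟩⟩ := hg
  let size : (ι → E) → ℝ := fun y => ∏ i, min 1 ‖y i‖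
  have hsize : Continuous size := by fun_prop
  let U : Set (ι → E) := {y | ∀ i, y i ≠ 0}
  let time : (ι → E) → I := fun y => projIcc 0 1 zero_le_one (2 - 2 * size y)
  let f : (ι → E) → X := fun y =>
    if hy : y ∈ U then H (time y, fun i => radialProj ⟨y i, hy i⟩) else p
  have hf : Continuous f := by
    have hU : IsOpen U := by
      simp only [U, ofPred_forall]
      exact isOpen_iInter_of_finite fun i => isOpen_ne_fun (by fun_prop) continuous_const
    refine continuous_of_continuousOn_isOpen_of_continuousOn_compl hU
      (isClosed_le continuous_const hsize : IsClosed {y | 1 / 2 ≤ size y}) ?_ ?_ ?_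
    · intro y hy i hi
      have : size y = 0 := Finset.prod_eq_zero (Finset.mem_univ i) (by simp [hi])
      rw [mem_ofPred_eq, this] at hy
      norm_num at hy
    · rw [continuousOn_iff_continuous_domRestrict]
      have hproj : Continuous fun y : U => fun i => radialProj ⟨y.1 i, y.2 i⟩ :=
        continuous_pi fun i => continuous_radialProj.comp
          (((continuous_apply i).comp continuous_subtype_val).subtype_mk _)
      have : Continuous fun y : U => H (time y, fun i => radialProj ⟨y.1 i, y.2 i⟩) :=
        H.continuous.comp (.prodMk (by fun_prop) hproj)
      exact this.congr fun y => by simp only [domRestrict_apply, f, dif_pos y.2]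
    · refine (continuousOn_const (c := p)).congr fun y hy => ?_
      have htime : time y = 1 := projIcc_of_right_le _ (by
        have := not_le.1 (show ¬ 1 / 2 ≤ size y from hy)
        linarith)
      simp [f, htime]
  refine ⟨⟨f, hf⟩, fun x => ?_⟩
  have hxU : (fun i => (x i : E)) ∈ U := fun i => ne_zero_of_mem_unit_sphere (x i)
  have htime : time (fun i => x i) = 0 := projIcc_of_le_left _ (by simp [size])
  simp only [ContinuousMap.coe_mk, f, dif_pos hxU, htime, H.apply_zero]
  exact congrArg g (funext fun i => radialProj_coe (x i) _)

theorem exists_isFixedPt_of_nullhomotopic [FiniteDimensional ℝ E] {ι : Type*} [Finite ι]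
    {g : C(ι → sphere (0 : E) 1, ι → sphere (0 : E) 1)} (hg : g.Nullhomotopic) :
    ∃ x, Function.IsFixedPt g x := by
  cases nonempty_fintype ι
  obtain ⟨f, hf⟩ := exists_extension_of_nullhomotopic hg
  have bounded : Bornology.IsBounded (range fun y i => (f y i : E)) :=
    isBounded_iff_forall_norm_le.2 ⟨1, forall_mem_range.2 fun y =>
      (pi_norm_le_iff_of_nonneg zero_le_one).2 fun i => (norm_eq_of_mem_sphere _).le⟩
  obtain ⟨y, hy⟩ := brouwer_fixed_point (by fun_prop) bounded
  exact ⟨f y, (hf (f y)).symm.trans (congrArg f hy)⟩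

theorem HasPlanners.le_of_sphere [FiniteDimensional ℝ E] [Nontrivial E] {n k : ℕ}
    (h : HasPlanners (sphere (0 : E) 1) n k) : n ≤ k := by
  by_contra! hkn
  obtain ⟨p⟩ := (NormedSpace.sphere_nonempty (x := (0 : E))).2 zero_le_one |>.to_subtype
  obtain ⟨G, hG, hGx⟩ := h.exists_nullhomotopic hkn p
  let antipode : C(Fin k → sphere (0 : E) 1, Fin k → sphere (0 : E) 1) :=
    ⟨fun x => -x, by fun_prop⟩
  obtain ⟨x, hx⟩ := exists_isFixedPt_of_nullhomotopic (hG.comp_right antipode)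
  obtain ⟨i, hi⟩ := hGx x
  have hneg : -(G x i) = x i := congrFun hx i
  rw [hi] at hneg
  exact ne_neg_of_mem_unit_sphere ℝ (x i) hneg.symm

theorem HasBidirPlanners.hasPlanners {X : Type*} [TopologicalSpace X] {n k : ℕ}
    (h : HasBidirPlanners X n k) : HasPlanners X n k :=
  let ⟨U, hUo, hU, _, hs⟩ := h
  ⟨U, hUo, hU, fun i => (hs i).imp fun _ h => h.1⟩

end LowerBound

section BentPath

open Set

/-- The tent function of height and half-width `1` centred at `c`. -/
noncomputable def tent (c τ : ℝ) : ℝ := max 0 (1 - |τ - c|)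

theorem tent_eq_zero {c τ : ℝ} (h : 1 ≤ |τ - c|) : tent c τ = 0 :=
  max_eq_left (by linarith)

theorem tent_of_abs_le {c τ : ℝ} (h : |τ - c| ≤ 1) : tent c τ = 1 - |τ - c| :=
  max_eq_right (by linarith)

theorem tent_natCast (i j : ℕ) : tent i j = if i = j then 1 else 0 := by
  split_ifs with h
  · simp [h, tent]
  · have : 1 ≤ |(j : ℤ) - i| := Int.one_le_abs (sub_ne_zero.2 (mod_cast Ne.symm h))
    exact tent_eq_zero (mod_cast this)

theorem tent_sub_comm (N c τ : ℝ) : tent (N - c) τ = tent c (N - τ) := by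
  unfold tent
  rw [sub_right_comm N τ c, abs_sub_comm]

theorem tent_self_add {c s : ℝ} (hs : s ∈ Icc 0 1) : tent c (c + s) = 1 - s := by
  have habs : |c + s - c| = s := by rw [add_sub_cancel_left, abs_of_nonneg hs.1]
  rw [tent_of_abs_le (habs.trans_le hs.2), habs]

theorem tent_add_one_add {c s : ℝ} (hs : s ∈ Icc 0 1) : tent (c + 1) (c + s) = s := by
  have habs : |c + s - (c + 1)| = 1 - s := by
    rw [add_sub_add_left_eq_sub, abs_of_nonpos (sub_nonpos.2 hs.2), neg_sub]
  rw [tent_of_abs_le (habs.trans_le (by linarith [hs.1])), habs, sub_sub_cancel]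

theorem tent_natCast_add_of_ne {i j : ℕ} {s : ℝ} (hs : s ∈ Icc 0 1) (h : i ≠ j) (h' : i ≠ j + 1) :
    tent i (j + s) = 0 := by
  refine tent_eq_zero (le_abs.2 ?_)
  rcases h.lt_or_gt with h | h
  · have : (i : ℝ) + 1 ≤ j := mod_cast h
    exact .inl (by linarith [hs.1])
  · have : (j : ℝ) + 1 + 1 ≤ i := mod_cast (by omega : j + 1 + 1 ≤ i)
    exact .inr (by linarith [hs.2])

theorem tent_mul_tent_eq_zero {i j : ℕ} {s : ℝ} (hs : s ∈ Icc 0 1) (h : i ≠ j) :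
    tent i (j + s) * tent (i + 1) (j + s) = 0 := by
  by_cases h' : i = j + 1
  · have := tent_natCast_add_of_ne hs (i := i + 1) (j := j) (by omega) (by omega)
    rw [← Nat.cast_add_one, this, mul_zero]
  · rw [tent_natCast_add_of_ne hs h h', zero_mul]

section NormedSpace

variable {E : Type*} [NormedAddCommGroup E] [NormedSpace ℝ E] {N : ℕ}

/-- The path in `E` that visits the vertex `x j` at time `j`, runs affinely between consecutive
vertices, and is pushed along its `e`-th edge by a bump in the direction `w e`. -/
noncomputable def bentPath (x : Fin (N + 1) → E) (w : Fin N → E) (τ : ℝ) : E :=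
  ∑ j : Fin (N + 1), tent j τ • x j + ∑ e : Fin N, (4 * (tent e τ * tent (e + 1) τ)) • w e

@[fun_prop]
theorem continuous_bentPath {Z : Type*} [TopologicalSpace Z] {x : Z → Fin (N + 1) → E}
    {w : Z → Fin N → E} {τ : Z → ℝ} (hx : Continuous x) (hw : Continuous w) (hτ : Continuous τ) :
    Continuous fun z => bentPath (x z) (w z) (τ z) := by
  unfold bentPath tent
  fun_prop

theorem bentPath_natCast (x : Fin (N + 1) → E) (w : Fin N → E) (j : Fin (N + 1)) :
    bentPath x w (j : ℕ) = x j := by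
  have bump : ∀ e : Fin N, tent e (j : ℕ) * tent (e + 1) (j : ℕ) = 0 := fun e => by
    rw [← Nat.cast_add_one, tent_natCast, tent_natCast]
    split_ifs <;> first | omega | simp
  simp only [bentPath, bump, mul_zero, zero_smul, Finset.sum_const_zero, add_zero]
  simp only [tent_natCast, Fin.val_inj, ite_smul, one_smul, zero_smul, Finset.sum_ite_eq',
    Finset.mem_univ, if_true]

theorem bentPath_natCast_add (x : Fin (N + 1) → E) (w : Fin N → E) (e : Fin N) {s : ℝ}
    (hs : s ∈ Icc 0 1) :
    bentPath x w ((e : ℕ) + s) =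
      (1 - s) • x e.castSucc + s • x e.succ + (4 * ((1 - s) * s)) • w e := by
  have vertices : ∑ j : Fin (N + 1), tent j ((e : ℕ) + s) • x j =
      (1 - s) • x e.castSucc + s • x e.succ := by
    rw [Fintype.sum_eq_add e.castSucc e.succ e.castSucc_lt_succ.ne fun j ⟨h, h'⟩ => by
      rw [tent_natCast_add_of_ne (i := j) (j := e) hs (Fin.val_ne_of_ne h) (Fin.val_ne_of_ne h'),
        zero_smul]]
    rw [Fin.val_castSucc, Fin.val_succ, Nat.cast_add_one, tent_self_add hs, tent_add_one_add hs]
  have bumps : ∑ e' : Fin N, (4 * (tent e' ((e : ℕ) + s) * tent (e' + 1) ((e : ℕ) + s))) • w e' =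
      (4 * ((1 - s) * s)) • w e := by
    rw [Fintype.sum_eq_single e fun e' he => by
      rw [tent_mul_tent_eq_zero hs (Fin.val_ne_of_ne he), mul_zero, zero_smul]]
    rw [tent_self_add hs, tent_add_one_add hs]
  rw [bentPath, vertices, bumps]

theorem bentPath_rev (x : Fin (N + 1) → E) (w : Fin N → E) (τ : ℝ) :
    bentPath (fun j => x j.rev) (fun e => w e.rev) τ = bentPath x w (N - τ) := by
  have vertex : ∀ j : Fin (N + 1), tent (j.rev : ℕ) τ = tent j (N - τ) := fun j => by
    rw [← tent_sub_comm, Fin.val_rev, Nat.add_sub_add_right, Nat.cast_sub (Fin.is_le j)]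
  have bump : ∀ e : Fin N, tent (e.rev : ℕ) τ * tent ((e.rev : ℕ) + 1) τ =
      tent e (N - τ) * tent (e + 1) (N - τ) := fun e => by
    have h := vertex e.castSucc
    rw [Fin.rev_castSucc, Fin.val_succ, Nat.cast_add_one, Fin.val_castSucc] at h
    have h' := vertex e.succ
    rw [Fin.rev_succ, Fin.val_castSucc, Fin.val_succ, Nat.cast_add_one] at h'
    rw [h, h', mul_comm]
  unfold bentPath
  rw [← Equiv.sum_comp Fin.revPerm, ← Equiv.sum_comp (Fin.revPerm (n := N))]
  simp only [Fin.revPerm_apply, Fin.rev_rev, vertex, bump]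

theorem exists_eq_natCast_add_of_mem_Icc [NeZero N] {τ : ℝ} (hτ : τ ∈ Icc 0 (N : ℝ)) :
    ∃ e : Fin N, ∃ s ∈ Icc (0 : ℝ) 1, τ = (e : ℕ) + s := by
  rcases hτ.2.eq_or_lt with rfl | h
  · refine ⟨⟨N - 1, Nat.sub_one_lt (NeZero.ne N)⟩, 1, ⟨zero_le_one, le_rfl⟩, ?_⟩
    rw [Nat.cast_pred (NeZero.pos N), sub_add_cancel]
  · refine ⟨⟨⌊τ⌋₊, (Nat.floor_lt hτ.1).2 h⟩, τ - ⌊τ⌋₊, ⟨?_, ?_⟩, (add_sub_cancel _ _).symm⟩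
    · exact sub_nonneg.2 (Nat.floor_le hτ.1)
    · linarith [Nat.lt_floor_add_one τ]

theorem segment_ne_zero_of_norm_eq {a b : E} (hab : ‖a‖ = ‖b‖) (h : a + b ≠ 0) {s : ℝ}
    (hs : s ∈ Icc 0 1) : (1 - s) • a + s • b ≠ 0 := by
  intro h0
  have hb : b ≠ 0 := fun hb => h (by rw [hb, norm_zero, norm_eq_zero] at hab; simp [hab, hb])
  have hnorm : (1 - s) * ‖b‖ = s * ‖b‖ := by
    have := congrArg norm (eq_neg_of_add_eq_zero_left h0)
    rwa [norm_neg, norm_smul_of_nonneg (sub_nonneg.2 hs.2), norm_smul_of_nonneg hs.1, hab] at this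
  have hs' : 1 - s = s := mul_right_cancel₀ (norm_ne_zero_iff.2 hb) hnorm
  rw [hs', ← smul_add] at h0
  refine h ((smul_eq_zero.1 h0).resolve_left fun hs0 => ?_)
  linarith

end NormedSpace

section InnerProductSpace

variable {E : Type*} [NormedAddCommGroup E] [InnerProductSpace ℝ E] {N : ℕ}

/-- The affine path from `a` to `b ≈ -a` splits as the path from `a` to `-a` and an error of norm
`s * ‖a + b‖ < 1 / 2`; bent in an orthogonal direction, the former stays at distance at least
`√3 / 2` from the origin. -/
theorem bent_segment_ne_zero {a b v : E} (ha : ‖a‖ = 1) (hv : ‖v‖ = 1) (hav : inner ℝ a v = 0)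
    (hab : ‖a + b‖ < 1 / 2) {s : ℝ} (hs : s ∈ Icc 0 1) :
    (1 - s) • a + s • b + (4 * ((1 - s) * s)) • v ≠ 0 := by
  intro h0
  set u := 4 * ((1 - s) * s)
  have bent : (1 - 2 * s) • a + u • v = -(s • (a + b)) := by
    refine eq_neg_of_add_eq_zero_left (Eq.trans ?_ h0)
    module
  have norm_sq_bent : ‖(1 - 2 * s) • a + u • v‖ ^ 2 = 1 - u + u ^ 2 := by
    rw [norm_add_sq_real, real_inner_smul_left, real_inner_smul_right, hav, norm_smul, norm_smul,
      ha, hv, mul_one, mul_one, Real.norm_eq_abs, Real.norm_eq_abs, sq_abs, sq_abs]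
    ring
  have norm_error : ‖s • (a + b)‖ < 1 / 2 := by
    rw [norm_smul_of_nonneg hs.1]
    exact (mul_le_of_le_one_left (norm_nonneg _) hs.2).trans_lt hab
  rw [bent, norm_neg] at norm_sq_bent
  nlinarith [norm_nonneg (s • (a + b)), sq_nonneg (2 * u - 1)]

theorem bentPath_ne_zero [NeZero N] {x : Fin (N + 1) → E} {w : Fin N → E} (hx : ∀ j, ‖x j‖ = 1)
    (hw : ∀ e, (w e = 0 ∧ x e.castSucc + x e.succ ≠ 0) ∨
      (‖w e‖ = 1 ∧ (inner ℝ (x e.castSucc) (w e) = 0 ∨ inner ℝ (x e.succ) (w e) = 0) ∧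
        ‖x e.castSucc + x e.succ‖ < 1 / 2))
    {τ : ℝ} (hτ : τ ∈ Icc 0 (N : ℝ)) : bentPath x w τ ≠ 0 := by
  obtain ⟨e, s, hs, rfl⟩ := exists_eq_natCast_add_of_mem_Icc hτ
  rw [bentPath_natCast_add x w e hs]
  rcases hw e with ⟨hwe, hne⟩ | ⟨hwe, horth | horth, hlt⟩
  · rw [hwe, smul_zero, add_zero]
    exact segment_ne_zero_of_norm_eq ((hx _).trans (hx _).symm) hne hs
  · exact bent_segment_ne_zero (hx _) hwe horth hlt hs
  · have h := bent_segment_ne_zero (hx e.succ) hwe horth (by rwa [add_comm])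
      (Icc.one_sub_mem hs)
    rwa [sub_sub_cancel, add_comm (s • _), mul_comm s] at h

end InnerProductSpace

end BentPath

section GapSet

open Set

variable {ι Y : Type*}

/-- The set of points at which the functions `d i` with `i ∈ S` are smaller than `c`, the other
ones are positive, and all the former are smaller than all the latter. -/
def gapSet (d : ι → Y → ℝ) (c : ℝ) (S : Finset ι) : Set Y :=
  {y | (∀ i ∈ S, d i y < c) ∧ (∀ j ∉ S, 0 < d j y) ∧ ∀ i ∈ S, ∀ j ∉ S, d i y < d j y}

theorem isOpen_gapSet [Finite ι] [TopologicalSpace Y] {d : ι → Y → ℝ} (hd : ∀ i, Continuous (d i))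
    (c : ℝ) (S : Finset ι) : IsOpen (gapSet d c S) := by
  simp only [gapSet, ofPred_and, ofPred_forall]
  have lt_const : ∀ i, IsOpen {y | d i y < c} := fun i => isOpen_lt (hd i) continuous_const
  have const_lt : ∀ i, IsOpen {y | 0 < d i y} := fun i => isOpen_lt continuous_const (hd i)
  have lt : ∀ i j, IsOpen {y | d i y < d j y} := fun i j => isOpen_lt (hd i) (hd j)
  exact (isOpen_iInter_of_finite fun i => isOpen_iInter_of_finite fun _ => lt_const i).inter
    ((isOpen_iInter_of_finite fun j => isOpen_iInter_of_finite fun _ => const_lt j).inter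
      (isOpen_iInter_of_finite fun i => isOpen_iInter_of_finite fun _ =>
        isOpen_iInter_of_finite fun j => isOpen_iInter_of_finite fun _ => lt i j))

theorem eq_of_mem_gapSet_of_card_eq {d : ι → Y → ℝ} {c : ℝ} {S T : Finset ι}
    (hST : S.card = T.card) {y : Y} (hS : y ∈ gapSet d c S) (hT : y ∈ gapSet d c T) : S = T := by
  by_contra hne
  obtain ⟨i, hiS, hiT⟩ := Finset.not_subset.1 fun h => hne (Finset.eq_of_subset_of_card_le h hST.ge)
  obtain ⟨j, hjT, hjS⟩ := Finset.not_subset.1 fun h =>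
    hne (Finset.eq_of_subset_of_card_le h hST.le).symm
  exact lt_asymm (hS.2.2 i hiS j hjS) (hT.2.2 j hjT i hiT)

theorem iUnion_gapSet [Finite ι] {d : ι → Y → ℝ} (hd : ∀ i y, 0 ≤ d i y) {c : ℝ} (hc : 0 < c) :
    ⋃ S, gapSet d c S = univ := by
  classical
  cases nonempty_fintype ι
  refine eq_univ_of_forall fun y => ?_
  let Z : Finset ι := {i | d i y = 0}
  have zero : ∀ i ∈ Z, d i y = 0 := fun i hi => (Finset.mem_filter_univ i).1 hi
  have pos : ∀ j ∉ Z, 0 < d j y := fun j hj =>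
    (hd j y).lt_of_ne' fun h => hj ((Finset.mem_filter_univ j).2 h)
  exact mem_iUnion.2 ⟨Z, fun i hi => (zero i hi).trans_lt hc, pos,
    fun i hi j hj => (zero i hi).trans_lt (pos j hj)⟩

theorem mem_gapSet_map {d : ι → Y → ℝ} {c : ℝ} {S : Finset ι} {y z : Y} (e : ι ≃ ι)
    (h : ∀ i, d i z = d (e.symm i) y) (hy : y ∈ gapSet d c S) :
    z ∈ gapSet d c (S.map e.toEmbedding) := by
  simp only [gapSet, mem_ofPred_eq, Finset.mem_map_equiv, h]
  exact ⟨fun i => hy.1 _, fun j => hy.2.1 _, fun i hi j => hy.2.2 _ hi _⟩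

end GapSet

section UpperBound

open Set Metric

/-- Planners on the open sets `W i` glue along the values of `κ`, because the `W i` on which `κ`
takes the same value are disjoint. -/
theorem hasBidirPlanners_of_pairwise_disjoint {X ι : Type*} [TopologicalSpace X] {n k : ℕ}
    {W : ι → Set (Fin n → X)} (hWo : ∀ i, IsOpen (W i)) (hW : ⋃ i, W i = univ) (κ : ι → Fin k)
    (hκ : ∀ i j x, κ i = κ j → x ∈ W i → x ∈ W j → i = j) (ρ : ι → ι) (hρκ : ∀ i, κ (ρ i) = κ i)
    (hρ : ∀ i, ∀ x ∈ W i, rtuple x ∈ W (ρ i)) (s : ∀ i, C(W i, C(I, X)))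
    (hs : ∀ i (x : W i) j, s i x (evalPt n j) = x.1 j)
    (hsρ : ∀ i (x : W i), s (ρ i) ⟨rtuple x.1, hρ i x x.2⟩ = rpath (s i x)) :
    HasBidirPlanners X n k := by
  let U : Fin k → Set (Fin n → X) := fun l => ⋃ i : {i // κ i = l}, W i
  refine ⟨U, fun l => isOpen_iUnion fun i => hWo i, eq_univ_of_forall fun x => ?_, ?_, fun l => ?_⟩
  · obtain ⟨i, hi⟩ := mem_iUnion.1 (hW ▸ mem_univ x)
    exact mem_iUnion.2 ⟨κ i, mem_iUnion.2 ⟨⟨i, rfl⟩, hi⟩⟩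
  · intro l x hx
    obtain ⟨⟨i, hi⟩, hxi⟩ := mem_iUnion.1 hx
    exact mem_iUnion.2 ⟨⟨ρ i, (hρκ i).trans hi⟩, hρ i x hxi⟩
  let piece : {i // κ i = l} → Set (U l) := fun i => Subtype.val ⁻¹' W i
  let planner : ∀ i : {i // κ i = l}, C(piece i, C(I, X)) := fun i =>
    (s i).comp ⟨fun x => ⟨x.1.1, x.2⟩, by fun_prop⟩
  have compatible : ∀ i j x (hi : x ∈ piece i) (hj : x ∈ piece j),
      planner i ⟨x, hi⟩ = planner j ⟨x, hj⟩ := fun i j x hi hj => by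
    obtain rfl : i = j := Subtype.ext (hκ i j x (i.2.trans j.2.symm) hi hj)
    rfl
  have cover : ∀ x, ∃ i, piece i ∈ nhds x := fun x => by
    obtain ⟨i, hi⟩ := mem_iUnion.1 x.2
    exact ⟨i, ((hWo i).preimage continuous_subtype_val).mem_nhds hi⟩
  let glued := ContinuousMap.liftCover piece planner compatible cover
  have glued_eq : ∀ (i : {i // κ i = l}) (x : U l) (hx : x.1 ∈ W i), glued x = s i ⟨x, hx⟩ :=
    fun i x hx => ContinuousMap.liftCover_coe (i := i) ⟨x, hx⟩
  refine ⟨glued, fun x j => ?_, fun x hx => ?_⟩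
  · obtain ⟨i, hi⟩ := mem_iUnion.1 x.2
    rw [glued_eq i x hi, hs]
  · obtain ⟨i, hi⟩ := mem_iUnion.1 x.2
    rw [glued_eq i x hi, glued_eq ⟨ρ i, (hρκ i).trans i.2⟩ _ (hρ i x hi)]
    exact hsρ i ⟨x, hi⟩

/-- The end of the edge `e` that is closer to the middle of the vertices `0, …, N`. -/
def innerVertex {N : ℕ} (e : Fin N) : Fin (N + 1) := if 2 * (e : ℕ) < N then e.succ else e.castSucc

theorem innerVertex_rev {N : ℕ} (hN : Even N) (e : Fin N) :
    innerVertex e.rev = (innerVertex e).rev := by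
  have hiff : 2 * (e.rev : ℕ) < N ↔ ¬ 2 * (e : ℕ) < N := by
    obtain ⟨q, rfl⟩ := hN
    rw [Fin.val_rev]
    omega
  simp only [innerVertex, hiff, ite_not]
  split_ifs
  · rw [Fin.rev_succ]
  · rw [Fin.rev_castSucc]

theorem coe_evalPt_mul (N : ℕ) [NeZero N] (j : Fin (N + 1)) :
    N * (evalPt (N + 1) j : ℝ) = (j : ℕ) := by
  simp only [evalPt, Nat.cast_add_one, add_sub_cancel_right]
  exact mul_div_cancel₀ _ (NeZero.ne _)

variable {E : Type*} [NormedAddCommGroup E] {N : ℕ}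

/-- How far the ends of the edge `e` of the tuple `x` are from being antipodal. -/
noncomputable def antipodalDefect (e : Fin N) (x : Fin (N + 1) → sphere (0 : E) 1) : ℝ :=
  ‖(x e.castSucc + x e.succ : E)‖

theorem antipodalDefect_rtuple (e : Fin N) (x : Fin (N + 1) → sphere (0 : E) 1) :
    antipodalDefect e (rtuple x) = antipodalDefect e.rev x := by
  simp only [antipodalDefect, rtuple, Fin.rev_castSucc, Fin.rev_succ, add_comm]

section NormedSpace

variable [NormedSpace ℝ E]

/-- The bent path through the tuple `x` of points of the sphere, with time rescaled to `[0, 1]`,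
whose edges in `S` are bent in the direction of the vector field `v`. -/
noncomputable def sphereBentPath (v : C(sphere (0 : E) 1, E)) (S : Finset (Fin N))
    (x : Fin (N + 1) → sphere (0 : E) 1) (t : I) : E :=
  bentPath (fun j => (x j : E)) (fun e => if e ∈ S then v (x (innerVertex e)) else 0) (N * t)

theorem continuous_sphereBentPath (v : C(sphere (0 : E) 1, E)) (S : Finset (Fin N)) :
    Continuous fun z : (Fin (N + 1) → sphere (0 : E) 1) × I => sphereBentPath v S z.1 z.2 := by
  unfold sphereBentPath
  refine continuous_bentPath (by fun_prop) (continuous_pi fun e => ?_) (by fun_prop)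
  split_ifs <;> fun_prop

theorem sphereBentPath_evalPt [NeZero N] (v : C(sphere (0 : E) 1, E)) (S : Finset (Fin N))
    (x : Fin (N + 1) → sphere (0 : E) 1) (j : Fin (N + 1)) :
    sphereBentPath v S x (evalPt (N + 1) j) = x j := by
  rw [sphereBentPath, coe_evalPt_mul, bentPath_natCast]

theorem sphereBentPath_rtuple (hN : Even N) (v : C(sphere (0 : E) 1, E)) (S : Finset (Fin N))
    (x : Fin (N + 1) → sphere (0 : E) 1) (t : I) :
    sphereBentPath v (S.map Fin.revPerm.toEmbedding) (rtuple x) t =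
      sphereBentPath v S x (unitInterval.symm t) := by
  have h := bentPath_rev (fun j => (x j : E))
    (fun e => if e ∈ S then v (x (innerVertex e)) else 0) (N * t)
  simp only [sphereBentPath, rtuple, Finset.mem_map_equiv, Fin.revPerm_symm, Fin.revPerm_apply,
    ← innerVertex_rev hN, unitInterval.coe_symm_eq, mul_one_sub]
  exact h

end NormedSpace

variable [InnerProductSpace ℝ E]

theorem sphereBentPath_ne_zero [NeZero N] {v : C(sphere (0 : E) 1, E)} (hv : ∀ x, ‖v x‖ = 1)
    (hv_inner : ∀ x : sphere (0 : E) 1, inner ℝ (x : E) (v x) = 0) {S : Finset (Fin N)}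
    {x : Fin (N + 1) → sphere (0 : E) 1} (hx : x ∈ gapSet antipodalDefect (1 / 2) S) (t : I) :
    sphereBentPath v S x t ≠ 0 := by
  refine bentPath_ne_zero (fun j => norm_eq_of_mem_sphere _) (fun e => ?_)
    ⟨mul_nonneg N.cast_nonneg t.2.1, mul_le_of_le_one_right N.cast_nonneg t.2.2⟩
  by_cases he : e ∈ S
  · refine .inr ⟨by rw [if_pos he, hv], ?_, hx.1 e he⟩
    rw [if_pos he, innerVertex]
    split_ifs
    exacts [.inr (hv_inner _), .inl (hv_inner _)]
  · exact .inl ⟨if_neg he, norm_pos_iff.1 (hx.2.1 e he)⟩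

theorem hasBidirPlanners_sphere_of_tangent_field (hN : Even N) [NeZero N]
    {v : C(sphere (0 : E) 1, E)} (hv : ∀ x, ‖v x‖ = 1)
    (hv_inner : ∀ x : sphere (0 : E) 1, inner ℝ (x : E) (v x) = 0) :
    HasBidirPlanners (sphere (0 : E) 1) (N + 1) (N + 1) := by
  let W : Finset (Fin N) → Set (Fin (N + 1) → sphere (0 : E) 1) := gapSet antipodalDefect (1 / 2)
  let raw : ∀ S, W S × I → ({0}ᶜ : Set E) := fun S z =>
    ⟨sphereBentPath v S z.1 z.2, sphereBentPath_ne_zero hv hv_inner z.1.2 z.2⟩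
  have continuous_raw : ∀ S, Continuous (raw S) := fun S =>
    ((continuous_sphereBentPath v S).comp (by fun_prop :
      Continuous fun z : W S × I => (z.1.1, z.2))).subtype_mk _
  refine hasBidirPlanners_of_pairwise_disjoint (W := W)
    (isOpen_gapSet (fun e => by unfold antipodalDefect; fun_prop) _)
    (iUnion_gapSet (fun e x => norm_nonneg _) one_half_pos)
    (fun S => ⟨S.card, by simpa [Nat.lt_succ_iff] using S.card_le_univ⟩)
    (fun S T x hST => eq_of_mem_gapSet_of_card_eq (Fin.mk.inj hST))
    (fun S => S.map Fin.revPerm.toEmbedding) (fun S => Fin.ext (S.card_map _))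
    (fun S x => mem_gapSet_map Fin.revPerm fun e => antipodalDefect_rtuple e x)
    (fun S => ContinuousMap.curry ⟨fun z => radialProj (raw S z), by fun_prop⟩) ?_ ?_
  · intro S x j
    simp [raw, sphereBentPath_evalPt, radialProj_coe]
  · intro S x
    exact ContinuousMap.ext fun t =>
      congrArg radialProj (Subtype.ext (sphereBentPath_rtuple hN v S x t))

theorem exists_linearIsometry_inner_self_eq_zero [FiniteDimensional ℝ E]
    (hE : Even (Module.finrank ℝ E)) : ∃ J : E →ₗᵢ[ℝ] E, ∀ x, inner ℝ x (J x) = 0 := by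
  obtain ⟨r, hr⟩ := hE
  let F := EuclideanSpace ℂ (Fin r)
  let : InnerProductSpace ℝ F := InnerProductSpace.rclikeToReal ℂ F
  have finrank_F : Module.finrank ℝ E = Module.finrank ℝ F := by
    rw [finrank_real_of_complex, finrank_euclideanSpace_fin, hr, two_mul]
  let e : E ≃ₗᵢ[ℝ] F :=
    (stdOrthonormalBasis ℝ E).equiv (stdOrthonormalBasis ℝ F) (finCongr finrank_F)
  let mulI : F →ₗᵢ[ℝ] F := ⟨Complex.I • LinearMap.id, fun z => by simp [norm_smul]⟩
  refine ⟨e.symm.toLinearIsometry.comp (mulI.comp e.toLinearIsometry), fun x => ?_⟩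
  have : inner ℝ (e x) (Complex.I • e x) = 0 := real_inner_I_smul_self ℂ (e x)
  rw [← e.inner_map_map]
  simpa [mulI] using this

end UpperBound

theorem TCbeta_sphere_odd_general {E : Type*} [NormedAddCommGroup E] [InnerProductSpace ℝ E]
    [FiniteDimensional ℝ E] [Nontrivial E] (hE : Even (Module.finrank ℝ E)) {n : ℕ} (hn : 3 ≤ n)
    (hno : Odd n) : TCbeta (Metric.sphere (0 : E) 1) n = n := by
  obtain ⟨N, rfl⟩ : ∃ N, n = N + 1 := ⟨n - 1, by omega⟩
  have : NeZero N := ⟨by omega⟩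
  have hN : Even N := by simpa [Nat.odd_add_one] using hno
  obtain ⟨J, hJ⟩ := exists_linearIsometry_inner_self_eq_zero hE
  refine le_antisymm (sInf_le ⟨N + 1, rfl, ?_⟩) (le_sInf ?_)
  · exact hasBidirPlanners_sphere_of_tangent_field hN
      (v := ⟨fun x => J x, by fun_prop⟩) (by simp) fun x => hJ x
  · rintro _ ⟨k, rfl, hk⟩
    exact Nat.cast_le.2 hk.hasPlanners.le_of_sphere

/-- For every `m ≥ 1` odd and every `n ≥ 3` odd,
`TC^β_n(S^m) = n`. -/
theorem TCbeta_sphere_odd (m n : ℕ) (hm : 1 ≤ m) (hmo : Odd m) (hn : 3 ≤ n) (hno : Odd n) :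
    TCbeta (Sph m) n = (n : ℕ∞) :=
  TCbeta_sphere_odd_general (by rw [finrank_euclideanSpace_fin]; exact hmo.add_one) hn hno
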